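/- arXiv:2509.21581 — 3 statements merged into one kernel-verified Lean document; each statement's English description precedes it below -/
import Mathlib

section
/- Let β be a nonzero real number and let f ∈ 𝓢(ℝ², ℂ). Then for every ρ' ∈ ℝ², H_{−β}[H_β[f]](ρ') = f(ρ'), where the outer transformation H_{−β} is applied to the function σ ↦ H_β[f](σ). That is, H_{−β} is the inverse of H_β on Schwartz functions: H_β^{−1} = H_{−β}. -/
open MeasureTheory Filter
open scoped RealInnerProductSpace

noncomputable section

/-- The Euclidean plane `ℝ²`. -/
abbrev Plane := EuclideanSpace ℝ (Fin 2)

/-- Hyperbolic fractional-order Fourier transformation of the first kind of order `β`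
(for `β ≠ 0`), with `coth β = cosh β / sinh β`. -/
def fracH (β : ℝ) (f : Plane → ℂ) (ρ' : Plane) : ℂ :=
  Complex.I * Real.exp β / Real.sinh β *
    Complex.exp (-(Complex.I * Real.pi * ‖ρ'‖ ^ 2 * (Real.cosh β / Real.sinh β))) *
    ∫ ρ : Plane,
      Complex.exp (-(Complex.I * Real.pi * ‖ρ‖ ^ 2 * (Real.cosh β / Real.sinh β))) *
      Complex.exp (2 * Real.pi * Complex.I * ⟪ρ', ρ⟫ / Real.sinh β) * f ρ

open scoped FourierTransform

/-- The `n`-th derivative of `t ↦ exp (i t)` along the real line. -/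
lemma iteratedDeriv_cexp_ofReal_mul_I (n : ℕ) :
    iteratedDeriv n (fun t : ℝ => Complex.exp (t * Complex.I)) =
      fun t : ℝ => Complex.I ^ n * Complex.exp (t * Complex.I) := by
  induction n with
  | zero => simp
  | succ n ih =>
    rw [iteratedDeriv_succ, ih]
    funext t
    have h : HasDerivAt (fun t : ℝ => (t : ℂ) * Complex.I) Complex.I t := by
      simpa using (Complex.ofRealCLM.hasDerivAt (x := t)).mul_const Complex.I
    rw [(h.cexp.const_mul (Complex.I ^ n)).deriv]
    ring

/-- The character `t ↦ exp (i t)` of the real line has temperate growth. -/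
lemma hasTemperateGrowth_cexp_ofReal_mul_I :
    (fun t : ℝ => Complex.exp (t * Complex.I)).HasTemperateGrowth := by
  refine ⟨(Complex.ofRealCLM.contDiff.mul contDiff_const).cexp, fun n => ⟨0, 1, fun t => ?_⟩⟩
  rw [norm_iteratedFDeriv_eq_norm_iteratedDeriv, iteratedDeriv_cexp_ofReal_mul_I]
  simp [Complex.norm_exp_ofReal_mul_I]

/-- The quadratic chirp `x ↦ exp (i a ‖x‖²)` has temperate growth. -/
lemma hasTemperateGrowth_cexp_norm_sq {E : Type*} [NormedAddCommGroup E] [InnerProductSpace ℝ E]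
    (a : ℝ) :
    (fun x : E => Complex.exp (((a * ‖x‖ ^ 2 : ℝ) : ℂ) * Complex.I)).HasTemperateGrowth :=
  hasTemperateGrowth_cexp_ofReal_mul_I.comp
    ((Function.HasTemperateGrowth.const a).mul (Function.hasTemperateGrowth_norm_sq E))

/-- The quadratic chirp of rate `c`, `x ↦ exp (-iπ c ‖x‖²)`. -/
def chirp (c : ℝ) (x : Plane) : ℂ :=
  Complex.exp (((-(Real.pi * c) * ‖x‖ ^ 2 : ℝ) : ℂ) * Complex.I)

lemma chirp_neg_mul_chirp (c : ℝ) (x : Plane) : chirp (-c) x * chirp c x = 1 := by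
  rw [chirp, chirp, ← Complex.exp_add, ← Complex.exp_zero]
  congr 1
  push_cast
  ring

/-- `H_β` is a chirp multiplication, an inverse Fourier transform and a dilation, followed by
another chirp multiplication. -/
lemma fracH_eq_fourierInv (β : ℝ) (f : Plane → ℂ) (x : Plane) :
    fracH β f x = Complex.I * Real.exp β / Real.sinh β * chirp (Real.cosh β / Real.sinh β) x *
      𝓕⁻ (fun y => chirp (Real.cosh β / Real.sinh β) y * f y) ((Real.sinh β)⁻¹ • x) := by
  have hchirp (y : Plane) :
      Complex.exp (-(Complex.I * Real.pi * ‖y‖ ^ 2 * (Real.cosh β / Real.sinh β))) =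
        chirp (Real.cosh β / Real.sinh β) y := by
    rw [chirp]
    congr 1
    push_cast
    ring
  simp only [fracH, hchirp, Real.fourierInv_eq']
  congr 2
  funext y
  have hphase : Complex.exp (2 * Real.pi * Complex.I * ⟪x, y⟫ / Real.sinh β) =
      Complex.exp (((2 * Real.pi * ⟪y, (Real.sinh β)⁻¹ • x⟫ : ℝ) : ℂ) * Complex.I) := by
    rw [real_inner_smul_right, real_inner_comm]
    congr 1
    push_cast
    ring
  rw [hphase, smul_eq_mul]
  ring

lemma fourierInv_const_mul (a : ℂ) (g : Plane → ℂ) (x : Plane) :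
    𝓕⁻ (fun y => a * g y) x = a * 𝓕⁻ g x := by
  rw [Real.fourierInv_eq', Real.fourierInv_eq', ← integral_const_mul]
  congr 1
  funext y
  simp only [smul_eq_mul]
  ring

/-- Fourier inversion on the plane, with the inverse transform dilated by `s`. -/
lemma fourierInv_fourierInv_dilation (g : SchwartzMap Plane ℂ) (s : ℝ) (x : Plane) :
    𝓕⁻ (fun y => 𝓕⁻ (g : Plane → ℂ) (s⁻¹ • y)) ((-s)⁻¹ • x) = (s : ℂ) ^ 2 * g x := by
  have hinv : 𝓕 (𝓕⁻ (g : Plane → ℂ)) x = g x := by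
    rw [← SchwartzMap.fourierInv_coe, ← SchwartzMap.fourier_coe,
      FourierTransform.fourier_fourierInv_eq]
  rw [← hinv, Real.fourierInv_eq', Real.fourier_eq' (𝓕⁻ (g : Plane → ℂ))]
  have hdil := Measure.integral_comp_inv_smul (volume : Measure Plane)
    (fun v => Complex.exp (((-2 * Real.pi * ⟪v, x⟫ : ℝ) : ℂ) * Complex.I) •
      𝓕⁻ (g : Plane → ℂ) v) s
  rw [finrank_euclideanSpace_fin, abs_of_nonneg (sq_nonneg s), Complex.real_smul,
    Complex.ofReal_pow] at hdil
  rw [← hdil]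
  congr 1
  funext y
  rw [real_inner_smul_right, real_inner_smul_left, inv_neg]
  congr 4
  ring

/-- `H_{−β}` is the inverse of `H_β` on Schwartz functions. -/
theorem stmt3 (β : ℝ) (hβ : β ≠ 0)
    (f : SchwartzMap Plane ℂ) (ρ' : Plane) :
    fracH (-β) (fun σ => fracH β (⇑f) σ) ρ' = f ρ' := by
  have hs : Real.sinh β ≠ 0 := Real.sinh_ne_zero.mpr hβ
  set s := Real.sinh β with hs_def
  set c := Real.cosh β / s with hc_def
  have hgrowth : (chirp c).HasTemperateGrowth := hasTemperateGrowth_cexp_norm_sq _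
  have hcoe : ⇑(SchwartzMap.smulLeftCLM ℂ (chirp c) f) = fun y => chirp c y * f y :=
    SchwartzMap.smulLeftCLM_apply hgrowth f
  have hcancel : (fun y => chirp (-c) y * fracH β f y) =
      fun y => Complex.I * Real.exp β / s *
        𝓕⁻ ⇑(SchwartzMap.smulLeftCLM ℂ (chirp c) f) (s⁻¹ • y) := by
    funext y
    rw [fracH_eq_fourierInv, hcoe]
    linear_combination (Complex.I * Real.exp β / s *
      𝓕⁻ (fun y => chirp c y * f y) (s⁻¹ • y)) * chirp_neg_mul_chirp c y
  have hexp : (Real.exp (-β) : ℂ) * Real.exp β = 1 := by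
    rw [← Complex.ofReal_mul, ← Real.exp_add, neg_add_cancel, Real.exp_zero, Complex.ofReal_one]
  rw [fracH_eq_fourierInv, Real.sinh_neg, Real.cosh_neg, ← hs_def, div_neg, ← hc_def, hcancel,
    fourierInv_const_mul,
    fourierInv_fourierInv_dilation, hcoe]
  have hs' : (s : ℂ) ≠ 0 := Complex.ofReal_ne_zero.mpr hs
  calc _ = -(Complex.I ^ 2) * (Real.exp (-β) * Real.exp β) *
          (chirp (-c) ρ' * chirp c ρ') * f ρ' := by
        push_cast
        field_simp
    _ = f ρ' := by rw [hexp, chirp_neg_mul_chirp, Complex.I_sq]; ring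

end
end

section
/- Let β be a real number and let f₊ : ℝ² → ℂ be the function f₊(ρ) = (1−i)·e^{β/2}·exp(−iπ‖ρ‖²) − (1+i)·e^{−β/2}·exp(iπ‖ρ‖²). Then for every ρ' ∈ ℝ², the Gaussian-regularized value of K_β[f₊](ρ') equals i·e^β·f₊(ρ'). In other words, f₊ is an eigenfunction of the hyperbolic fractional Fourier transformation of the second kind K_β with eigenvalue i·e^β. -/
open MeasureTheory Filter
open scoped RealInnerProductSpace

noncomputable section

/-- Gaussian-regularized hyperbolic fractional Fourier transformation of the second kind:
the integrand carries the extra factor `exp (-π ε ‖ρ‖²)`. -/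
def fracKreg (β ε : ℝ) (f : Plane → ℂ) (ρ' : Plane) : ℂ :=
  Complex.I * Real.exp β / Real.cosh β *
    Complex.exp (Complex.I * Real.pi * ‖ρ'‖ ^ 2 * Real.tanh β) *
    ∫ ρ : Plane,
      Complex.exp (-(Real.pi * ε * ‖ρ‖ ^ 2 : ℝ)) *
      Complex.exp (-(Complex.I * Real.pi * ‖ρ‖ ^ 2 * Real.tanh β)) *
      Complex.exp (2 * Real.pi * Complex.I * ⟪ρ', ρ⟫ / Real.cosh β) * f ρ

/-- The regularized integrand of `K_β` on the chirp `exp (-iπs‖ρ‖²)` is a Gaussian in `ρ`. -/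
lemma regularized_chirp_integrand_eq (β ε s : ℝ) (ρ' ρ : Plane) :
    Complex.exp (-(Real.pi * ε * ‖ρ‖ ^ 2 : ℝ)) *
      Complex.exp (-(Complex.I * Real.pi * ‖ρ‖ ^ 2 * Real.tanh β)) *
      Complex.exp (2 * Real.pi * Complex.I * ⟪ρ', ρ⟫ / Real.cosh β) *
      Complex.exp (-(Complex.I * Real.pi * s * ‖ρ‖ ^ 2)) =
    Complex.exp (-(Real.pi * (ε + Complex.I * (Real.tanh β + s))) * ‖ρ‖ ^ 2 +
      2 * Real.pi * Complex.I / Real.cosh β * ⟪ρ', ρ⟫) := by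
  rw [← Complex.exp_add, ← Complex.exp_add, ← Complex.exp_add]
  congr 1
  push_cast
  ring

lemma regularized_chirp_re_pos {ε : ℝ} (hε : 0 < ε) (u s : ℝ) :
    0 < (Real.pi * (ε + Complex.I * (u + s)) : ℂ).re := by
  simpa using mul_pos Real.pi_pos hε

lemma integrable_regularized_chirp (β s : ℝ) {ε : ℝ} (hε : 0 < ε) (ρ' : Plane) :
    Integrable fun ρ : Plane =>
      Complex.exp (-(Real.pi * ε * ‖ρ‖ ^ 2 : ℝ)) *
      Complex.exp (-(Complex.I * Real.pi * ‖ρ‖ ^ 2 * Real.tanh β)) *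
      Complex.exp (2 * Real.pi * Complex.I * ⟪ρ', ρ⟫ / Real.cosh β) *
      Complex.exp (-(Complex.I * Real.pi * s * ‖ρ‖ ^ 2)) := by
  simp_rw [regularized_chirp_integrand_eq]
  exact GaussianFourier.integrable_cexp_neg_mul_sq_norm_add
    (regularized_chirp_re_pos hε _ s) _ ρ'

lemma fracKreg_chirp (β s : ℝ) {ε : ℝ} (hε : 0 < ε) (ρ' : Plane) :
    fracKreg β ε (fun ρ => Complex.exp (-(Complex.I * Real.pi * s * ‖ρ‖ ^ 2))) ρ' =
      Complex.I * Real.exp β / Real.cosh β *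
        Complex.exp (Complex.I * Real.pi * ‖ρ'‖ ^ 2 * Real.tanh β) *
        (Real.pi / (Real.pi * (ε + Complex.I * (Real.tanh β + s))) *
          Complex.exp ((2 * Real.pi * Complex.I / Real.cosh β) ^ 2 * ‖ρ'‖ ^ 2 /
            (4 * (Real.pi * (ε + Complex.I * (Real.tanh β + s)))))) := by
  unfold fracKreg
  simp_rw [regularized_chirp_integrand_eq]
  rw [GaussianFourier.integral_cexp_neg_mul_sq_norm_add (regularized_chirp_re_pos hε _ s)]
  simp

/-- The limiting value of `K_β` on the chirp `exp (-iπs‖ρ‖²)`, for `s ≠ -tanh β`. -/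
lemma tendsto_fracKreg_chirp (β s : ℝ) (hs : Real.tanh β + s ≠ 0) (ρ' : Plane) :
    Tendsto (fun ε : ℝ =>
        fracKreg β ε (fun ρ => Complex.exp (-(Complex.I * Real.pi * s * ‖ρ‖ ^ 2))) ρ')
      (nhdsWithin 0 (Set.Ioi 0))
      (nhds (Real.exp β / (Real.cosh β * (Real.tanh β + s)) *
        Complex.exp (Complex.I * Real.pi * ‖ρ'‖ ^ 2 *
          (Real.tanh β + 1 / (Real.cosh β ^ 2 * (Real.tanh β + s)))))) := by
  have hpi : (Real.pi : ℂ) ≠ 0 := by exact_mod_cast Real.pi_ne_zero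
  have hs' : (Real.tanh β + s : ℂ) ≠ 0 := by exact_mod_cast hs
  have hc : (Real.cosh β : ℂ) ≠ 0 := by exact_mod_cast (Real.cosh_pos β).ne'
  have hcont : ContinuousAt (fun ε : ℝ =>
      Complex.I * Real.exp β / Real.cosh β *
        Complex.exp (Complex.I * Real.pi * ‖ρ'‖ ^ 2 * Real.tanh β) *
        (Real.pi / (Real.pi * (ε + Complex.I * (Real.tanh β + s))) *
          Complex.exp ((2 * Real.pi * Complex.I / Real.cosh β) ^ 2 * ‖ρ'‖ ^ 2 /
            (4 * (Real.pi * (ε + Complex.I * (Real.tanh β + s))))))) 0 := by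
    have hden : (Real.pi * ((0 : ℝ) + Complex.I * (Real.tanh β + s)) : ℂ) ≠ 0 := by
      simpa only [Complex.ofReal_zero, zero_add] using
        mul_ne_zero hpi (mul_ne_zero Complex.I_ne_zero hs')
    have hden4 : (4 * (Real.pi * ((0 : ℝ) + Complex.I * (Real.tanh β + s))) : ℂ) ≠ 0 :=
      mul_ne_zero (by norm_num) hden
    fun_prop (disch := assumption)
  have hlim := hcont.tendsto.mono_left (nhdsWithin_le_nhds (s := Set.Ioi 0))
  have hval := hlim.congr' (f₂ := fun ε : ℝ =>
      fracKreg β ε (fun ρ => Complex.exp (-(Complex.I * Real.pi * s * ‖ρ‖ ^ 2))) ρ') <| by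
    filter_upwards [self_mem_nhdsWithin] with ε hε
    exact (fracKreg_chirp β s hε ρ').symm
  convert hval using 2
  rw [Complex.ofReal_zero, zero_add, mul_mul_mul_comm, ← Complex.exp_add]
  congr 1
  · field_simp
  · congr 1
    field_simp
    ring

lemma fracKreg_sub_of_chirps (β : ℝ) {ε : ℝ} (hε : 0 < ε) (a b : ℂ) (s t : ℝ) (ρ' : Plane) :
    fracKreg β ε (fun ρ => a * Complex.exp (-(Complex.I * Real.pi * s * ‖ρ‖ ^ 2)) -
        b * Complex.exp (-(Complex.I * Real.pi * t * ‖ρ‖ ^ 2))) ρ' =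
      a * fracKreg β ε (fun ρ => Complex.exp (-(Complex.I * Real.pi * s * ‖ρ‖ ^ 2))) ρ' -
      b * fracKreg β ε (fun ρ => Complex.exp (-(Complex.I * Real.pi * t * ‖ρ‖ ^ 2))) ρ' := by
  unfold fracKreg
  simp_rw [mul_sub, mul_left_comm _ a, mul_left_comm _ b]
  rw [integral_sub ((integrable_regularized_chirp β s hε ρ').const_mul a)
    ((integrable_regularized_chirp β t hε ρ').const_mul b), integral_const_mul,
    integral_const_mul]
  ring

/-- `f₊ = (1−i)e^(β/2)·g − (1+i)e^(−β/2)·h` is an eigenfunction of `K_β`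
(Gaussian-regularized) with eigenvalue `i·e^β`. -/
theorem stmt7 (β : ℝ)
    (fp : Plane → ℂ)
    (hfp : ∀ ρ, fp ρ =
      (1 - Complex.I) * Real.exp (β / 2) * Complex.exp (-(Complex.I * Real.pi * ‖ρ‖ ^ 2)) -
      (1 + Complex.I) * Real.exp (-β / 2) * Complex.exp (Complex.I * Real.pi * ‖ρ‖ ^ 2))
    (ρ' : Plane) :
    Tendsto (fun ε : ℝ => fracKreg β ε fp ρ')
      (nhdsWithin 0 (Set.Ioi 0)) (nhds (Complex.I * Real.exp β * fp ρ')) := by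
  have hc : Real.cosh β ≠ 0 := (Real.cosh_pos β).ne'
  have hsq : Real.cosh β ^ 2 = Real.sinh β ^ 2 + 1 := Real.cosh_sq β
  have hplus : Real.tanh β + 1 = Real.exp β / Real.cosh β := by
    rw [Real.tanh_eq_sinh_div_cosh, ← Real.cosh_add_sinh]; field_simp; ring
  have hminus : Real.tanh β + -1 = -Real.exp (-β) / Real.cosh β := by
    rw [Real.tanh_eq_sinh_div_cosh, ← Real.cosh_sub_sinh]; field_simp; ring
  have hplus0 : Real.tanh β + 1 ≠ 0 := by
    rw [hplus]; exact div_ne_zero (Real.exp_ne_zero _) hc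
  have hminus0 : Real.tanh β + -1 ≠ 0 := by
    rw [hminus]; exact div_ne_zero (neg_ne_zero.2 (Real.exp_ne_zero _)) hc
  have hphase_plus : Real.tanh β + 1 / (Real.cosh β ^ 2 * (Real.tanh β + 1)) = 1 := by
    field_simp
    rw [Real.tanh_eq_sinh_div_cosh]; field_simp; linear_combination -hsq
  have hphase_minus : Real.tanh β + 1 / (Real.cosh β ^ 2 * (Real.tanh β + -1)) = -1 := by
    field_simp
    rw [Real.tanh_eq_sinh_div_cosh]; field_simp; linear_combination -hsq
  have hamp_plus : Real.exp β / (Real.cosh β * (Real.tanh β + 1)) = 1 := by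
    rw [hplus]; field_simp
  have hamp_minus : Real.exp β / (Real.cosh β * (Real.tanh β + -1)) = -Real.exp β ^ 2 := by
    rw [hminus, Real.exp_neg]; field_simp
  have hfp' : fp = fun ρ =>
      (1 - Complex.I) * Real.exp (β / 2) *
        Complex.exp (-(Complex.I * Real.pi * (1 : ℝ) * ‖ρ‖ ^ 2)) -
      (1 + Complex.I) * Real.exp (-β / 2) *
        Complex.exp (-(Complex.I * Real.pi * (-1 : ℝ) * ‖ρ‖ ^ 2)) := by
    funext ρ
    simp [hfp]
  have hlim := ((tendsto_fracKreg_chirp β 1 hplus0 ρ').const_mul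
      ((1 - Complex.I) * Real.exp (β / 2))).sub
    ((tendsto_fracKreg_chirp β (-1) hminus0 ρ').const_mul ((1 + Complex.I) * Real.exp (-β / 2)))
  have hval := hlim.congr' (f₂ := fun ε : ℝ => fracKreg β ε fp ρ') <| by
    filter_upwards [self_mem_nhdsWithin] with ε hε
    rw [hfp']
    exact (fracKreg_sub_of_chirps β hε _ _ 1 (-1) ρ').symm
  convert hval using 2
  have hphase_plus' := congrArg (fun x : ℝ => (x : ℂ)) hphase_plus
  have hphase_minus' := congrArg (fun x : ℝ => (x : ℂ)) hphase_minus
  have hamp_plus' := congrArg (fun x : ℝ => (x : ℂ)) hamp_plus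
  have hamp_minus' := congrArg (fun x : ℝ => (x : ℂ)) hamp_minus
  have hexp : (Real.exp β : ℂ) = Real.exp (β / 2) ^ 2 := by
    rw [← Complex.ofReal_pow, ← Real.exp_nat_mul]; congr 2; push_cast; ring
  have hinv : (Real.exp (β / 2) * Real.exp (-β / 2) : ℂ) = 1 := by
    rw [← Complex.ofReal_mul, ← Real.exp_add, neg_div, add_neg_cancel]; simp
  simp only [Complex.ofReal_add, Complex.ofReal_div, Complex.ofReal_mul, Complex.ofReal_pow,
    Complex.ofReal_neg, Complex.ofReal_one] at hphase_plus' hphase_minus' hamp_plus' hamp_minus' ⊢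
  rw [hphase_plus', hphase_minus', hamp_plus', hamp_minus', hfp, hexp, mul_one, mul_neg_one]
  generalize Complex.exp (Complex.I * Real.pi * ‖ρ'‖ ^ 2) = h
  generalize Complex.exp (-(Complex.I * Real.pi * ‖ρ'‖ ^ 2)) = g
  linear_combination
    (-(1 + Complex.I) * (Real.exp (β / 2) : ℂ) ^ 3 * g -
      (Complex.I + Complex.I ^ 2) * Real.exp (β / 2) * h) * hinv -
    ((Real.exp (β / 2) : ℂ) ^ 3 * g + Real.exp (β / 2) * h) * Complex.I_sq

end
end

section
/- Let f ∈ 𝓢(ℝ², ℂ). Then for every ρ' ∈ ℝ², H_β[f](ρ') tends to f(ρ') as β tends to 0 through nonzero real values. That is, the hyperbolic fractional Fourier transformations of the first kind converge pointwise to the identity operator as the order tends to 0: H_0 = 𝓘. -/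
open MeasureTheory Filter
open scoped RealInnerProductSpace

noncomputable section

open scoped FourierTransform

/-- Dominated convergence for oscillatory or damped exponential weights. -/
lemma tendsto_integral_cexp_mul {α ι : Type*} [MeasurableSpace α] {μ : Measure α}
    {l : Filter ι} [l.IsCountablyGenerated] {a : ι → α → ℂ} {a₀ : α → ℂ} {φ : α → ℂ}
    (hφ : Integrable φ μ) (ha : ∀ i, Measurable (a i)) (hre : ∀ᶠ i in l, ∀ v, (a i v).re ≤ 0)
    (hlim : ∀ v, Tendsto (fun i => a i v) l (nhds (a₀ v))) :
    Tendsto (fun i => ∫ v, Complex.exp (a i v) * φ v ∂μ) l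
      (nhds (∫ v, Complex.exp (a₀ v) * φ v ∂μ)) := by
  refine tendsto_integral_filter_of_dominated_convergence (fun v => ‖φ v‖) ?_ ?_ hφ.norm ?_
  · exact Eventually.of_forall fun i =>
      (ha i).cexp.aestronglyMeasurable.mul hφ.aestronglyMeasurable
  · filter_upwards [hre] with i hi
    refine Eventually.of_forall fun v => ?_
    rw [norm_mul, Complex.norm_exp]
    exact mul_le_of_le_one_left (norm_nonneg _) (Real.exp_le_one_iff.mpr (hi v))
  · exact Eventually.of_forall fun v => ((hlim v).cexp).mul_const _

/-- Pairing a modulated Gaussian on the plane with a Fourier transform. -/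
lemma integral_gaussian_mul_fourier_of_re_pos {b : ℂ} (hb : 0 < b.re) (x : Plane)
    {h : Plane → ℂ} (hh : Integrable h) :
    ∫ v : Plane, Complex.exp (-b * ‖v‖ ^ 2 + 2 * Real.pi * Complex.I * ⟪x, v⟫) * 𝓕 h v =
      Real.pi / b * ∫ v : Plane, Complex.exp (-Real.pi ^ 2 * ‖x - v‖ ^ 2 / b) * h v := by
  have key := VectorFourier.integral_fourierIntegral_smul_eq_flip (L := innerₗ Plane)
    Real.continuous_fourierChar continuous_inner
    (GaussianFourier.integrable_cexp_neg_mul_sq_norm_add hb (2 * Real.pi * Complex.I) x) hh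
  rw [flip_innerₗ] at key
  calc _ = _ := key.symm
    _ = ∫ v : Plane, 𝓕 (fun v : Plane =>
          Complex.exp (-b * ‖v‖ ^ 2 + 2 * Real.pi * Complex.I * ⟪x, v⟫)) v * h v := rfl
    _ = _ := by
      simp_rw [fourier_gaussian_innerProductSpace' hb, ← integral_const_mul]
      simp [mul_assoc]

/-- Pairing a modulated, possibly purely oscillatory, Gaussian with a Fourier transform. -/
lemma integral_gaussian_mul_fourier {b : ℂ} (hb : 0 ≤ b.re) (hb₀ : b ≠ 0) (x : Plane)
    {h : Plane → ℂ} (hh : Integrable h) (hFh : Integrable (𝓕 h)) :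
    ∫ v : Plane, Complex.exp (-b * ‖v‖ ^ 2 + 2 * Real.pi * Complex.I * ⟪x, v⟫) * 𝓕 h v =
      Real.pi / b * ∫ v : Plane, Complex.exp (-Real.pi ^ 2 * ‖x - v‖ ^ 2 / b) * h v := by
  have hlim : Tendsto (fun ε : ℝ => b + ε) (nhdsWithin 0 (Set.Ioi 0)) (nhds b) := by
    have : Continuous fun ε : ℝ => b + ε := by fun_prop
    simpa using (this.tendsto 0).mono_left nhdsWithin_le_nhds
  have hpos : ∀ᶠ ε : ℝ in nhdsWithin 0 (Set.Ioi 0), 0 < (b + ε).re := by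
    filter_upwards [self_mem_nhdsWithin] with ε hε
    simpa using add_pos_of_nonneg_of_pos hb hε
  have hleft : Tendsto (fun ε : ℝ => ∫ v : Plane,
      Complex.exp (-(b + ε) * ‖v‖ ^ 2 + 2 * Real.pi * Complex.I * ⟪x, v⟫) * 𝓕 h v)
      (nhdsWithin 0 (Set.Ioi 0)) (nhds (∫ v : Plane,
        Complex.exp (-b * ‖v‖ ^ 2 + 2 * Real.pi * Complex.I * ⟪x, v⟫) * 𝓕 h v)) := by
    refine tendsto_integral_cexp_mul hFh (fun ε => by fun_prop) ?_ fun v => ?_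
    · filter_upwards [hpos] with ε hε v
      have : (-(b + ε) * ‖v‖ ^ 2 + 2 * Real.pi * Complex.I * ⟪x, v⟫ : ℂ).re
          = -((b + ε).re * ‖v‖ ^ 2) := by
        simp [← Complex.ofReal_pow]
        ring
      rw [this]
      exact neg_nonpos.mpr (by positivity)
    · exact (hlim.neg.mul_const _).add_const _
  have hright : Tendsto (fun ε : ℝ => Real.pi / (b + ε) * ∫ v : Plane,
      Complex.exp (-Real.pi ^ 2 * ‖x - v‖ ^ 2 / (b + ε)) * h v)
      (nhdsWithin 0 (Set.Ioi 0)) (nhds (Real.pi / b * ∫ v : Plane,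
        Complex.exp (-Real.pi ^ 2 * ‖x - v‖ ^ 2 / b) * h v)) := by
    refine (tendsto_const_nhds.div hlim hb₀).mul
      (tendsto_integral_cexp_mul hh (fun ε => by fun_prop) ?_ fun v => ?_)
    · filter_upwards [hpos] with ε hε v
      have : (-Real.pi ^ 2 * ‖x - v‖ ^ 2 / (b + ε) : ℂ)
          = ((-(Real.pi ^ 2 * ‖x - v‖ ^ 2) : ℝ) : ℂ) * (b + ε)⁻¹ := by
        push_cast
        ring
      rw [this, Complex.re_ofReal_mul, Complex.inv_re]
      exact mul_nonpos_of_nonpos_of_nonneg (neg_nonpos.mpr (by positivity))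
        (div_nonneg hε.le (Complex.normSq_nonneg _))
    · exact tendsto_const_nhds.div hlim hb₀
  refine tendsto_nhds_unique_of_eventuallyEq hleft hright ?_
  filter_upwards [hpos] with ε hε
  exact integral_gaussian_mul_fourier_of_re_pos hε x hh

/-- The transformation of a Fourier transform, as an oscillatory integral whose phase is regular
at `β = 0`. -/
lemma fracH_fourier {β : ℝ} (hβ : β ≠ 0) {h : Plane → ℂ} (hh : Integrable h)
    (hFh : Integrable (𝓕 h)) (ρ' : Plane) :
    fracH β (𝓕 h) ρ' = ((Real.exp β / Real.cosh β : ℝ) : ℂ) * ∫ v : Plane,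
      Complex.exp (((Real.pi * (Real.sinh β / Real.cosh β * (‖v‖ ^ 2 - ‖ρ'‖ ^ 2)
        - 2 * ⟪ρ', v⟫ / Real.cosh β) : ℝ) : ℂ) * Complex.I) * h v := by
  have hs : (Real.sinh β : ℂ) ≠ 0 := by
    exact_mod_cast Real.sinh_ne_zero.mpr hβ
  have hc : (Real.cosh β : ℂ) ≠ 0 := by
    exact_mod_cast (Real.cosh_pos β).ne'
  have hcs : (Real.cosh β : ℂ) ^ 2 = Real.sinh β ^ 2 + 1 := by
    exact_mod_cast Real.cosh_sq β
  have hpi : (Real.pi : ℂ) ≠ 0 := by exact_mod_cast Real.pi_ne_zero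
  set b : ℂ := Complex.I * Real.pi * (Real.cosh β / Real.sinh β) with hbdef
  have hb₀ : b ≠ 0 := mul_ne_zero (mul_ne_zero Complex.I_ne_zero hpi) (div_ne_zero hc hs)
  have hbre : b.re = 0 := by
    rw [hbdef, ← Complex.ofReal_div, mul_assoc, ← Complex.ofReal_mul, Complex.re_mul_ofReal]
    simp
  have hint := integral_gaussian_mul_fourier hbre.ge hb₀ ((Real.sinh β)⁻¹ • ρ') hh hFh
  have hL : ∀ v : Plane,
      Complex.exp (-(Complex.I * Real.pi * ‖v‖ ^ 2 * (Real.cosh β / Real.sinh β))) *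
        Complex.exp (2 * Real.pi * Complex.I * ⟪ρ', v⟫ / Real.sinh β) * 𝓕 h v =
      Complex.exp (-b * ‖v‖ ^ 2 + 2 * Real.pi * Complex.I * ⟪(Real.sinh β)⁻¹ • ρ', v⟫) *
        𝓕 h v := fun v => by
    rw [← Complex.exp_add, real_inner_smul_left, hbdef]
    push_cast
    ring_nf
  unfold fracH
  simp_rw [hL, hint]
  rw [← mul_assoc, ← integral_const_mul, ← integral_const_mul]
  congr 1
  ext v
  have hnorm : ((‖(Real.sinh β)⁻¹ • ρ' - v‖ : ℂ)) ^ 2 =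
      (Real.sinh β : ℂ)⁻¹ ^ 2 * ‖ρ'‖ ^ 2 - 2 * ((Real.sinh β : ℂ)⁻¹ * ⟪ρ', v⟫) + ‖v‖ ^ 2 := by
    have := norm_sub_sq_real ((Real.sinh β)⁻¹ • ρ') v
    rw [norm_smul, mul_pow, real_inner_smul_left, Real.norm_eq_abs, sq_abs] at this
    exact_mod_cast this
  have hpre : Complex.I * Real.exp β / Real.sinh β * (Real.pi / b)
      = ((Real.exp β / Real.cosh β : ℝ) : ℂ) := by
    rw [hbdef, Complex.ofReal_div]
    field_simp
  have hphase : -(Complex.I * Real.pi * ‖ρ'‖ ^ 2 * (Real.cosh β / Real.sinh β)) +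
      -Real.pi ^ 2 * ‖(Real.sinh β)⁻¹ • ρ' - v‖ ^ 2 / b =
      ((Real.pi * (Real.sinh β / Real.cosh β * (‖v‖ ^ 2 - ‖ρ'‖ ^ 2)
        - 2 * ⟪ρ', v⟫ / Real.cosh β) : ℝ) : ℂ) * Complex.I := by
    have hbinv : -(Real.pi : ℂ) ^ 2 / b = Complex.I * Real.pi * Real.sinh β / Real.cosh β := by
      rw [hbdef]
      field_simp
      simp
    rw [mul_div_right_comm, hbinv, hnorm]
    simp only [Complex.ofReal_mul, Complex.ofReal_sub, Complex.ofReal_div, Complex.ofReal_pow,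
      Complex.ofReal_ofNat]
    field_simp
    rw [hcs]
    ring
  rw [← hpre, ← hphase, Complex.exp_add]
  ring

/-- `H_β[f](ρ') → f(ρ')` as `β → 0` through nonzero values: `H_0 = 𝓘` in the limit sense. -/
theorem stmt18 (f : SchwartzMap Plane ℂ) (ρ' : Plane) :
    Tendsto (fun β : ℝ => fracH β (⇑f) ρ')
      (nhdsWithin 0 {(0 : ℝ)}ᶜ) (nhds (f ρ')) := by
  set h : SchwartzMap Plane ℂ := 𝓕⁻ f with hdef
  have hf : (f : Plane → ℂ) = 𝓕 (h : Plane → ℂ) := by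
    rw [← SchwartzMap.fourier_coe, hdef, FourierTransform.fourier_fourierInv_eq]
  have hFh : Integrable (𝓕 (h : Plane → ℂ)) := hf ▸ f.integrable
  have hpre : Tendsto (fun β : ℝ => ((Real.exp β / Real.cosh β : ℝ) : ℂ))
      (nhdsWithin 0 {(0 : ℝ)}ᶜ) (nhds 1) := by
    have : Continuous fun β : ℝ => ((Real.exp β / Real.cosh β : ℝ) : ℂ) :=
      Complex.continuous_ofReal.comp
        (Real.continuous_exp.div Real.continuous_cosh fun β => (Real.cosh_pos β).ne')
    simpa using (this.tendsto 0).mono_left nhdsWithin_le_nhds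
  have hlim := hpre.mul (tendsto_integral_cexp_mul (l := nhdsWithin 0 {(0 : ℝ)}ᶜ) (μ := volume)
    (a := fun β v => ((Real.pi * (Real.sinh β / Real.cosh β * (‖v‖ ^ 2 - ‖ρ'‖ ^ 2)
        - 2 * ⟪ρ', v⟫ / Real.cosh β) : ℝ) : ℂ) * Complex.I)
    (a₀ := fun v => ((-2 * Real.pi * ⟪v, ρ'⟫ : ℝ) : ℂ) * Complex.I)
    h.integrable (fun β => by fun_prop) (Eventually.of_forall fun β v => by
      rw [Complex.re_ofReal_mul, Complex.I_re, mul_zero]) fun v => by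
      have hcont : Continuous fun β : ℝ =>
          ((Real.pi * (Real.sinh β / Real.cosh β * (‖v‖ ^ 2 - ‖ρ'‖ ^ 2)
            - 2 * ⟪ρ', v⟫ / Real.cosh β) : ℝ) : ℂ) * Complex.I := by
        have hc : ∀ β : ℝ, Real.cosh β ≠ 0 := fun β => (Real.cosh_pos β).ne'
        fun_prop (disch := exact hc _)
      convert (hcont.tendsto 0).mono_left nhdsWithin_le_nhds using 2
      simp [real_inner_comm]
      ring)
  rw [hf, Real.fourier_eq']
  rw [one_mul] at hlim
  refine hlim.congr' ?_
  filter_upwards [self_mem_nhdsWithin] with β hβ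
  exact (fracH_fourier hβ h.integrable hFh ρ').symm

end
end
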